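/- Let m ∈ {1, 2, 3, 7, 11} and let F = ℚ(√(−m)) ⊂ ℂ with ring of integers 𝓞 = ℤ[ω_{−m}] (a Euclidean domain with respect to the norm). Let χ : F^× → {±1} be a group homomorphism with χ(u) = 1 for every unit u of 𝓞, and suppose there exist two non-associated prime elements p, q of 𝓞 with χ(p) = χ(q) = −1. Then RP₊(F)[1/2]_χ = 0, i.e. the class of [x] vanishes in RP₊(F)[1/2]_χ for every x ∈ F^×. -/

import Mathlib

noncomputable section

open Polynomial

/-- The ring `ℤ[1/2]`, realized as the subring of `ℚ` generated by `1/2`. -/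
def ZhalfSub : Subring ℚ := Subring.closure {(2 : ℚ)⁻¹}

abbrev Zhalf : Type := ZhalfSub

variable (F : Type) [Field F]

/-- The generator `[u]` of the free `ℤ[1/2]`-module on `Fˣ`. -/
def rpGen (u : Fˣ) : Fˣ →₀ Zhalf := Finsupp.single u 1

/-- The defining relations of `RP₊(F)[1/2]_χ`: (i) `[1] = 0`; (ii) the twisted five-term
relations; (iii) `χ(−1)·[x] = [x]`; (iv) `[x] = −[x⁻¹]`. -/
def rpRels (χ : Fˣ →* ℤˣ) : Set (Fˣ →₀ Zhalf) :=
  {v | v = rpGen F 1} ∪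
  {v | ∃ (x y : F) (hx0 : x ≠ 0) (hx1 : x ≠ 1) (hy0 : y ≠ 0) (hy1 : y ≠ 1) (_ : x ≠ y),
      v = rpGen F (Units.mk0 x hx0) - rpGen F (Units.mk0 y hy0)
        + ((χ (Units.mk0 x hx0) : ℤ) : Zhalf) •
            rpGen F (Units.mk0 (y / x) (div_ne_zero hy0 hx0))
        - ((χ (Units.mk0 (x⁻¹ - 1)
              (sub_ne_zero.mpr (fun h => hx1 (inv_eq_one.mp h)))) : ℤ) : Zhalf) •
            rpGen F (Units.mk0 ((1 - x⁻¹) / (1 - y⁻¹))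
              (div_ne_zero (sub_ne_zero.mpr (fun h => hx1 (inv_eq_one.mp h.symm)))
                (sub_ne_zero.mpr (fun h => hy1 (inv_eq_one.mp h.symm)))))
        + ((χ (Units.mk0 (1 - x) (sub_ne_zero.mpr (Ne.symm hx1))) : ℤ) : Zhalf) •
            rpGen F (Units.mk0 ((1 - x) / (1 - y))
              (div_ne_zero (sub_ne_zero.mpr (Ne.symm hx1)) (sub_ne_zero.mpr (Ne.symm hy1))))} ∪
  {v | ∃ u : Fˣ, v = ((χ (-1) : ℤ) : Zhalf) • rpGen F u - rpGen F u} ∪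
  {v | ∃ u : Fˣ, v = rpGen F u + rpGen F u⁻¹}

/-- The submodule of relations. -/
def rpSub (χ : Fˣ →* ℤˣ) : Submodule Zhalf (Fˣ →₀ Zhalf) :=
  Submodule.span Zhalf (rpRels F χ)

/-- The `ℤ[1/2]`-module `RP₊(F)[1/2]_χ`. -/
def RPplus (χ : Fˣ →* ℤˣ) : Type :=
  (Fˣ →₀ Zhalf) ⧸ rpSub F χ

instance (χ : Fˣ →* ℤˣ) : AddCommGroup (RPplus F χ) :=
  inferInstanceAs (AddCommGroup ((Fˣ →₀ Zhalf) ⧸ rpSub F χ))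

instance (χ : Fˣ →* ℤˣ) : Module Zhalf (RPplus F χ) :=
  inferInstanceAs (Module Zhalf ((Fˣ →₀ Zhalf) ⧸ rpSub F χ))

/-- The class `[u]` of `u ∈ F^×` in `RP₊(F)[1/2]_χ`. -/
def rpCls (χ : Fˣ →* ℤˣ) (u : Fˣ) : RPplus F χ :=
  Submodule.Quotient.mk (rpGen F u)

end

noncomputable section

/-- The complex square root of an integer `d` (equal to `i·√(−d)` when `d < 0`). -/
def sqrtC (d : ℤ) : ℂ :=
  if 0 ≤ d then ((Real.sqrt (d : ℝ) : ℝ) : ℂ) else Complex.I * ((Real.sqrt ((-d : ℤ) : ℝ) : ℝ) : ℂ)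

/-- `ω_d ∈ ℂ`: the standard generator of the ring of integers of `ℚ(√d)` for a
squarefree integer `d`, namely `(1 + √d)/2` if `d ≡ 1 (mod 4)` and `√d` otherwise. -/
def omegaQ (d : ℤ) : ℂ :=
  if d % 4 = 1 then (1 + sqrtC d) / 2 else sqrtC d

/-- The ring `ℤ[ω_d] = ℤ + ℤω_d`, as a subring of `ℂ`. -/
def quadRing (d : ℤ) : Subring ℂ := Subring.closure {omegaQ d}

end

noncomputable section

/-- The imaginary quadratic field `ℚ(√d) = ℚ(ω_d)`, as an intermediate field of `ℚ ⊆ ℂ`. -/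
def quadField (d : ℤ) : IntermediateField ℚ ℂ := IntermediateField.adjoin ℚ {omegaQ d}

/-- `ω_d` as an element of `ℚ(√d)`. -/
def omegaK (d : ℤ) : quadField d :=
  ⟨omegaQ d, IntermediateField.subset_adjoin ℚ {omegaQ d} rfl⟩

/-- The ring of integers `𝓞 = ℤ[ω_d] = ℤ + ℤω_d`, as a subring of `ℚ(√d)`. -/
def intRing (d : ℤ) : Subring (quadField d) := Subring.closure {omegaK d}

end

/-- A class of elements stable enough to behave like the odd-valuation part of a maximal ideal:
`c x = -1` and `c (1 - x) = 1`. -/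
def IsNear {F : Type*} [Field F] (c : F →*₀ ℤ) (x : F) : Prop := c x = -1 ∧ c (1 - x) = 1

/-- Elements of `ker c` whose multiplication, in both directions, preserves `IsNear c`. -/
def StabNear {F : Type*} [Field F] (c : F →*₀ ℤ) (h : F) : Prop :=
  c h = 1 ∧ ∀ x, IsNear c x → IsNear c (h * x) ∧ IsNear c (h⁻¹ * x)

section NearElements

variable {F : Type*} [Field F] {c : F →*₀ ℤ}

lemma chi_inv (hc : ∀ x, x ≠ 0 → c x = 1 ∨ c x = -1) (x : F) : c x⁻¹ = c x := by
  by_cases hx : x = 0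
  · simp [hx]
  have h : c x * c x⁻¹ = 1 := by rw [← map_mul, mul_inv_cancel₀ hx, map_one]
  rcases hc x hx with h1 | h1 <;> rw [h1] at h ⊢ <;> omega

lemma chi_div (hc : ∀ x, x ≠ 0 → c x = 1 ∨ c x = -1) (x y : F) : c (x / y) = c x * c y := by
  rw [div_eq_mul_inv, map_mul, chi_inv hc]

lemma chi_neg (hneg : c (-1) = 1) (x : F) : c (-x) = c x := by
  rw [← neg_one_mul, map_mul, hneg, one_mul]

lemma chi_sub_comm (hneg : c (-1) = 1) (x y : F) : c (x - y) = c (y - x) := by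
  rw [← neg_sub, chi_neg hneg]

lemma ne_zero_of_chi_eq_one {x : F} (h : c x = 1) : x ≠ 0 := by
  rintro rfl; simp at h

lemma ne_zero_of_chi_eq_neg_one {x : F} (h : c x = -1) : x ≠ 0 := by
  rintro rfl; simp at h

lemma ne_one_of_chi_eq_neg_one {x : F} (h : c x = -1) : x ≠ 1 := by
  rintro rfl; simp at h

lemma StabNear.mul {g h : F} (hg : StabNear c g) (hh : StabNear c h) : StabNear c (g * h) := by
  refine ⟨by rw [map_mul, hg.1, hh.1, one_mul], fun x hx => ⟨?_, ?_⟩⟩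
  · rw [mul_assoc]; exact (hg.2 _ (hh.2 _ hx).1).1
  · rw [mul_inv, mul_assoc]; exact (hg.2 _ (hh.2 _ hx).2).2

lemma StabNear.one : StabNear c (1 : F) := ⟨map_one c, fun x hx => by simpa using hx⟩

lemma StabNear.neg (hneg : c (-1) = 1) (hs : ∀ x, IsNear c x → IsNear c (-x)) {h : F}
    (hh : StabNear c h) : StabNear c (-h) := by
  refine ⟨by rw [chi_neg hneg, hh.1], fun x hx => ⟨?_, ?_⟩⟩
  · rw [neg_mul]; exact hs _ (hh.2 _ hx).1
  · rw [inv_neg, neg_mul]; exact hs _ (hh.2 _ hx).2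

/-- The elements `z` with `h - z` stabilizing `IsNear c` whenever `h` does. -/
def nearSubgroup (hneg : c (-1) = 1) (hs : ∀ x, IsNear c x → IsNear c (-x)) : AddSubgroup F where
  carrier := {z | ∀ h, StabNear c h → StabNear c (h - z)}
  zero_mem' := fun h hh => by simpa using hh
  add_mem' := fun {a b} ha hb h hh => by
    rw [← sub_sub]; exact hb _ (ha _ hh)
  neg_mem' := fun {a} ha h hh => by
    have := (ha _ (hh.neg hneg hs)).neg hneg hs
    rwa [show -(-h - a) = h - -a by ring] at this

lemma one_notMem_nearSubgroup (hneg : c (-1) = 1) (hs : ∀ x, IsNear c x → IsNear c (-x)) :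
    (1 : F) ∉ nearSubgroup hneg hs := fun h1 => by
  have := (h1 1 StabNear.one).1
  simp at this

lemma IsNear.stabNear_one_sub (hc : ∀ x, x ≠ 0 → c x = 1 ∨ c x = -1) (hneg : c (-1) = 1)
    (hmul : ∀ h x, c h = 1 → c (1 - h) = -1 → IsNear c x → IsNear c (h * x))
    {x : F} (hx : IsNear c x) : StabNear c (1 - x) := by
  have h0 := ne_zero_of_chi_eq_one hx.2
  refine ⟨hx.2, fun y hy => ⟨hmul _ _ hx.2 (by simpa using hx.1) hy, hmul _ _ ?_ ?_ hy⟩⟩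
  · rw [chi_inv hc, hx.2]
  · rw [show 1 - (1 - x)⁻¹ = -(x / (1 - x)) by field_simp; ring, chi_neg hneg, chi_div hc,
      hx.1, hx.2]; rfl

lemma IsNear.mem_nearSubgroup (hc : ∀ x, x ≠ 0 → c x = 1 ∨ c x = -1) (hneg : c (-1) = 1)
    (hs : ∀ x, IsNear c x → IsNear c (-x))
    (hmul : ∀ h x, c h = 1 → c (1 - h) = -1 → IsNear c x → IsNear c (h * x))
    {x : F} (hx : IsNear c x) : x ∈ nearSubgroup hneg hs := fun h hh => by
  have h0 := ne_zero_of_chi_eq_one hh.1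
  rw [show h - x = h * (1 - h⁻¹ * x) by field_simp]
  exact hh.mul ((hh.2 _ hx).2.stabNear_one_sub hc hneg hmul)

lemma IsNear.mul_pow_mem_nearSubgroup (hc : ∀ x, x ≠ 0 → c x = 1 ∨ c x = -1)
    (hneg : c (-1) = 1) (hs : ∀ x, IsNear c x → IsNear c (-x))
    (hmul : ∀ h x, c h = 1 → c (1 - h) = -1 → IsNear c x → IsNear c (h * x))
    {y : F} (hy : IsNear c y) (k : ℕ) :
    ∀ g, StabNear c g → g * y ^ (k + 1) ∈ nearSubgroup hneg hs := by
  induction k with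
  | zero =>
    intro g hg
    simpa using (hg.2 _ hy).1.mem_nearSubgroup hc hneg hs hmul
  | succ k ih =>
    intro g hg h hh
    have h1 := ih g hg h hh
    have h2 := ih (-(g * (1 - y)))
      ((hg.mul (hy.stabNear_one_sub hc hneg hmul)).neg hneg hs) _ h1
    rwa [show h - g * y ^ (k + 1) - -(g * (1 - y)) * y ^ (k + 1) = h - g * y ^ (k + 1 + 1) by
      ring] at h2

lemma IsNear.of_isIntegral (hc : ∀ x, x ≠ 0 → c x = 1 ∨ c x = -1)
    (hneg : c (-1) = 1) (hs : ∀ x, IsNear c x → IsNear c (-x))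
    (hmul : ∀ h x, c h = 1 → c (1 - h) = -1 → IsNear c x → IsNear c (h * x))
    {x : F} (hx : IsIntegral ℤ x) (hcx : c x = -1) : IsNear c x := by
  refine ⟨hcx, (hc (1 - x) (sub_ne_zero.2 (ne_one_of_chi_eq_neg_one hcx).symm)).resolve_right
    fun hfar => ?_⟩
  have hx0 := ne_zero_of_chi_eq_neg_one hcx
  have hy : IsNear c x⁻¹ := by
    refine ⟨by rw [chi_inv hc, hcx], ?_⟩
    rw [show 1 - x⁻¹ = -((1 - x) / x) by field_simp; ring, chi_neg hneg, chi_div hc, hfar, hcx]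
    rfl
  obtain ⟨P, hP, hPx⟩ := hx
  rw [Polynomial.eval₂_eq_sum_range, Finset.sum_range_succ, hP.coeff_natDegree, map_one,
    one_mul] at hPx
  have hone : (1 : F) = -∑ i ∈ Finset.range P.natDegree,
      P.coeff i • (1 * x⁻¹ ^ (P.natDegree - i - 1 + 1)) := by
    have : x ^ P.natDegree * (1 + ∑ i ∈ Finset.range P.natDegree,
        P.coeff i • (1 * x⁻¹ ^ (P.natDegree - i - 1 + 1))) = 0 := by
      rw [mul_add, mul_one, add_comm, Finset.mul_sum, ← hPx]
      congr 1
      refine Finset.sum_congr rfl fun i hi => ?_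
      rw [Finset.mem_range] at hi
      have hexp : x ^ P.natDegree = x ^ (P.natDegree - i - 1 + 1) * x ^ i := by
        rw [← pow_add]; congr 1; omega
      rw [hexp, zsmul_eq_mul, inv_pow, algebraMap_int_eq, eq_intCast]
      field_simp
    have := (mul_eq_zero.1 this).resolve_left (pow_ne_zero _ hx0)
    exact eq_neg_of_add_eq_zero_left this
  apply one_notMem_nearSubgroup hneg hs
  rw [hone]
  exact neg_mem (sum_mem fun i _ => zsmul_mem
    (hy.mul_pow_mem_nearSubgroup hc hneg hs hmul _ _ StabNear.one) _)

/-- The near elements cannot be stable under negation and under multiplication by all `h` with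
`c h = 1`, `c (1 - h) = -1`, once two comaximal integral elements have `c = -1`. -/
theorem not_isNear_stable (hc : ∀ x, x ≠ 0 → c x = 1 ∨ c x = -1)
    (hneg : c (-1) = 1) (hs : ∀ x, IsNear c x → IsNear c (-x))
    (hmul : ∀ h x, c h = 1 → c (1 - h) = -1 → IsNear c x → IsNear c (h * x))
    (O : Subring F) (hO : ∀ x ∈ O, IsIntegral ℤ x) {p q u w : F} (hp : p ∈ O) (hq : q ∈ O)
    (hu : u ∈ O) (hw : w ∈ O) (hcp : c p = -1) (hcq : c q = -1) (hbez : u * p + w * q = 1) :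
    False := by
  have near_of_mem : ∀ x ∈ O, c x = -1 → x ∈ nearSubgroup hneg hs := fun x hx hcx =>
    (IsNear.of_isIntegral hc hneg hs hmul (hO x hx) hcx).mem_nearSubgroup hc hneg hs hmul
  have mul_mem' : ∀ r ∈ O, c r = -1 → ∀ t ∈ O, t * r ∈ nearSubgroup hneg hs := by
    intro r hr hcr t ht
    by_cases ht0 : t = 0
    · simp [ht0]
    rcases hc t ht0 with h1 | h1
    · exact near_of_mem _ (mul_mem ht hr) (by rw [map_mul, h1, hcr]; rfl)
    · have hn := IsNear.of_isIntegral hc hneg hs hmul (hO t ht) h1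
      rw [show t * r = r - (1 - t) * r by ring]
      exact sub_mem (near_of_mem r hr hcr)
        (near_of_mem _ (mul_mem (sub_mem (one_mem O) ht) hr) (by rw [map_mul, hn.2, hcr]; rfl))
  apply one_notMem_nearSubgroup hneg hs
  rw [← hbez]
  exact add_mem (mul_mem' p hp hcp u hu) (mul_mem' q hq hcq w hw)

end NearElements

/-- A map `f` on `F^×` satisfying the relations of `RP₊(F)[1/2]_χ`, with values in a group without
`2`-torsion; `c` is the extension of `χ` by `0`. -/
structure IsTwistedBloch {F M : Type*} [Field F] [AddCommGroup M] (c : F →*₀ ℤ) (f : F → M) :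
    Prop where
  torsion : ∀ z : M, z + z = 0 → z = 0
  chi : ∀ x, x ≠ 0 → c x = 1 ∨ c x = -1
  chi_neg_one : c (-1) = 1
  map_one : f 1 = 0
  map_inv : ∀ x, x ≠ 0 → f x⁻¹ = -f x
  five : ∀ x y, x ≠ 0 → x ≠ 1 → y ≠ 0 → y ≠ 1 → x ≠ y →
    f x - f y + c x • f (y / x) - (c x * c (1 - x)) • f (y * (1 - x) / (x * (1 - y)))
      + c (1 - x) • f ((1 - x) / (1 - y)) = 0

namespace IsTwistedBloch

variable {F M : Type*} [Field F] [AddCommGroup M] {c : F →*₀ ℤ} {f : F → M}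

lemma map_div_comm (H : IsTwistedBloch c f) {x y : F} (hx : x ≠ 0) (hy : y ≠ 0) :
    f (x / y) = -f (y / x) := by
  rw [← inv_div, H.map_inv _ (div_ne_zero hy hx)]

lemma map_neg_one (H : IsTwistedBloch c f) : f (-1) = 0 := by
  have h := H.map_inv (-1) (by simp)
  rw [show (-1 : F)⁻¹ = -1 by norm_num] at h
  exact H.torsion _ (by nth_rw 1 [h]; simp)

/-- For `c a = c b = -1`, the elements `c (1 - a) • f a` and `c (1 - b) • f b` agree. -/
lemma smul_eq_smul (H : IsTwistedBloch c f) {a b : F} (ha : c a = -1) (hb : c b = -1) :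
    c (1 - b) • f a = c (1 - a) • f b := by
  have ha0 := ne_zero_of_chi_eq_neg_one ha
  have hb0 := ne_zero_of_chi_eq_neg_one hb
  have ha1 := sub_ne_zero.2 (ne_one_of_chi_eq_neg_one ha).symm
  have hb1 := sub_ne_zero.2 (ne_one_of_chi_eq_neg_one hb).symm
  by_cases hab : a * b = 1
  · obtain rfl : b = a⁻¹ := eq_inv_of_mul_eq_one_right hab
    rw [H.map_inv a ha0, show 1 - a⁻¹ = -((1 - a) / a) by field_simp; ring,
      chi_neg H.chi_neg_one, chi_div H.chi, ha]
    simp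
  have hab1 : 1 - a * b ≠ 0 := sub_ne_zero.2 (Ne.symm hab)
  have hba1 : 1 - b * a ≠ 0 := by rwa [mul_comm]
  obtain ⟨x, hx⟩ : ∃ x, x = (1 - b) / (1 - a * b) := ⟨_, rfl⟩
  have hx0 : x ≠ 0 := hx ▸ div_ne_zero hb1 hab1
  have h1x : 1 - x = b * (1 - a) / (1 - a * b) := by rw [hx]; field_simp; ring
  have h1y : 1 - a * x = (1 - a) / (1 - a * b) := by rw [hx]; field_simp; ring
  have h1x0 : 1 - x ≠ 0 := h1x ▸ div_ne_zero (mul_ne_zero hb0 ha1) hab1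
  have h1y0 : 1 - a * x ≠ 0 := h1y ▸ div_ne_zero ha1 hab1
  have hxy : x ≠ a * x := fun h => ha1 (by
    have : (1 - a) * x = 0 := by linear_combination h
    exact (mul_eq_zero.1 this).resolve_right hx0)
  have e1 := H.five x (a * x) hx0 (sub_ne_zero.1 h1x0).symm (mul_ne_zero ha0 hx0)
    (sub_ne_zero.1 h1y0).symm hxy
  have e2 := H.five (a * x) x (mul_ne_zero ha0 hx0) (sub_ne_zero.1 h1y0).symm hx0
    (sub_ne_zero.1 h1x0).symm hxy.symm
  have r1 : a * x / x = a := by field_simp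
  have r2 : (1 - x) / (1 - a * x) = b := by
    rw [h1x, h1y, div_div_div_cancel_right₀ hab1, mul_div_cancel_right₀ _ ha1]
  have r3 : a * x * (1 - x) / (x * (1 - a * x)) = a * b := by rw [← r2]; field_simp
  have cy : c (a * x) = -c x := by rw [map_mul, ha, neg_one_mul]
  have c1y : c (1 - a * x) = -c (1 - x) := by
    rw [h1x, h1y, chi_div H.chi, chi_div H.chi, map_mul, hb]; ring
  rw [r1, r2, r3] at e1
  rw [H.map_div_comm hx0 (mul_ne_zero ha0 hx0), H.map_div_comm h1y0 h1x0,
    H.map_div_comm (mul_ne_zero hx0 h1y0) (mul_ne_zero (mul_ne_zero ha0 hx0) h1x0), r1, r2, r3,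
    cy, c1y] at e2
  have key : c x • f a = -(c (1 - x) • f b) := by
    rw [← add_eq_zero_iff_eq_neg]
    refine H.torsion _ ?_
    linear_combination (norm := module) e1 + e2
  rw [h1x, hx, chi_div H.chi, chi_div H.chi, map_mul, hb] at key
  rcases H.chi _ hab1 with h | h <;> rw [h] at key
  · linear_combination (norm := module) key
  · linear_combination (norm := module) -key

section Values

variable (H : IsTwistedBloch c f) {C : M} (hC : ∀ a, c a = -1 → f a = c (1 - a) • C)

include H hC

lemma map_div_of_chi_ne {x y : F} (hx : c x = 1) (hy : c y = 1) (h1x : 1 - x ≠ 0)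
    (h1 : c (1 - y) = -c (1 - x)) : f (y / x) = f y - f x := by
  have hx0 := ne_zero_of_chi_eq_one hx
  have hy0 := ne_zero_of_chi_eq_one hy
  have hsq : c (1 - x) * c (1 - x) = 1 := by rcases H.chi _ h1x with h | h <;> rw [h] <;> rfl
  have h1y : 1 - y ≠ 0 := fun h => by rw [h, map_zero] at h1; nlinarith
  have hxy : x ≠ y := by rintro rfl; nlinarith
  have e := H.five x y hx0 (sub_ne_zero.1 h1x).symm hy0 (sub_ne_zero.1 h1y).symm hxy
  have eb := hC ((1 - x) / (1 - y)) (by rw [chi_div H.chi, h1]; linarith)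
  have ee := hC (y * (1 - x) / (x * (1 - y)))
    (by rw [chi_div H.chi, map_mul, map_mul, h1, hx, hy]; linarith)
  rw [show 1 - (1 - x) / (1 - y) = (x - y) / (1 - y) by field_simp; ring, chi_div H.chi] at eb
  rw [show 1 - y * (1 - x) / (x * (1 - y)) = (x - y) / (x * (1 - y)) by field_simp; ring,
    chi_div H.chi, map_mul, hx] at ee
  rw [eb, ee, hx] at e
  linear_combination (norm := module) e

lemma map_div_of_chi_eq_neg_one {x y : F} (hx : c x = -1) (hy : c y = -1)
    (h1x : c (1 - x) = 1) (h1y : c (1 - y) = -1) : f (y / x) = C + C := by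
  have hx0 := ne_zero_of_chi_eq_neg_one hx
  have hy0 := ne_zero_of_chi_eq_neg_one hy
  have h1x0 := ne_zero_of_chi_eq_one h1x
  have h1y0 := ne_zero_of_chi_eq_neg_one h1y
  have hxy : x ≠ y := by rintro rfl; rw [h1x] at h1y; norm_num at h1y
  have e := H.five x y hx0 (sub_ne_zero.1 h1x0).symm hy0 (sub_ne_zero.1 h1y0).symm hxy
  have eb := hC ((1 - x) / (1 - y)) (by rw [chi_div H.chi, h1x, h1y]; rfl)
  have ee := hC (y * (1 - x) / (x * (1 - y)))
    (by rw [chi_div H.chi, map_mul, map_mul, h1x, h1y, hx, hy]; rfl)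
  rw [show 1 - (1 - x) / (1 - y) = (x - y) / (1 - y) by field_simp; ring, chi_div H.chi] at eb
  rw [show 1 - y * (1 - x) / (x * (1 - y)) = (x - y) / (x * (1 - y)) by field_simp; ring,
    chi_div H.chi, map_mul, hx] at ee
  rw [eb, ee, hC x hx, hC y hy, hx, h1x, h1y] at e
  linear_combination (norm := module) -e

lemma map_one_sub_div {x y : F} (hx : c x = -1) (hy : c y = 1)
    (h1x : c (1 - x) = 1) (h1y : c (1 - y) = 1) : f ((1 - x) / (1 - y)) = f y - C := by
  have hx0 := ne_zero_of_chi_eq_neg_one hx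
  have hy0 := ne_zero_of_chi_eq_one hy
  have h1x0 := ne_zero_of_chi_eq_one h1x
  have h1y0 := ne_zero_of_chi_eq_one h1y
  have hxy : x ≠ y := by rintro rfl; rw [hx] at hy; norm_num at hy
  have e := H.five x y hx0 (sub_ne_zero.1 h1x0).symm hy0 (sub_ne_zero.1 h1y0).symm hxy
  have ea := hC (y / x) (by rw [chi_div H.chi, hx, hy]; rfl)
  have ee := hC (y * (1 - x) / (x * (1 - y)))
    (by rw [chi_div H.chi, map_mul, map_mul, h1x, h1y, hx, hy]; rfl)
  rw [show 1 - y / x = (x - y) / x by field_simp, chi_div H.chi, hx] at ea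
  rw [show 1 - y * (1 - x) / (x * (1 - y)) = (x - y) / (x * (1 - y)) by field_simp; ring,
    chi_div H.chi, map_mul, hx, h1y] at ee
  rw [ea, ee, hC x hx, hx, h1x] at e
  linear_combination (norm := module) e

lemma map_sub_map_eq {u v : F} (hu : c u = 1) (h1u : c (1 - u) = -1) (hv : c v = 1)
    (h1v : c (1 - v) = 1) : f u - f v = f (1 - v) - C := by
  rw [← H.map_div_of_chi_ne hC hv hu (ne_zero_of_chi_eq_one h1v) (by rw [h1u, h1v])]
  have := H.map_one_sub_div hC h1u h1v (by simpa using hu) (by simpa using hv)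
  simpa using this

lemma map_eq_zero_of_chi_one_sub [CharZero F] {u : F} (hu : c u = 1) (h1u : c (1 - u) = -1) :
    f u = 0 := by
  have hn : ∀ n : ℕ, n ≠ 0 → c (n : F) = 1 ∨ c (n : F) = -1 := fun n hn =>
    H.chi _ (Nat.cast_ne_zero.2 hn)
  obtain ⟨v, hv, h1v⟩ : ∃ v, c v = 1 ∧ c (1 - v) = 1 := by
    have h4 : c (4 : F) = c 2 * c 2 := by rw [← map_mul]; norm_num
    have h9 : c (9 : F) = c 3 * c 3 := by rw [← map_mul]; norm_num
    have h15 : c (15 : F) = c 3 * c 5 := by rw [← map_mul]; norm_num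
    have h16 : c (16 : F) = c 4 * c 4 := by rw [← map_mul]; norm_num
    rcases hn 2 (by norm_num) with h2 | h2 <;> rcases hn 3 (by norm_num) with h3 | h3 <;>
      rcases hn 5 (by norm_num) with h5 | h5 <;> push_cast at h2 h3 h5 <;>
      rw [h2] at h4 <;> rw [h3] at h9 <;> rw [h3, h5] at h15 <;> rw [h4] at h16
    iterate 4 exact ⟨-1, H.chi_neg_one, by rw [show (1 : F) - -1 = 2 by norm_num, h2]⟩
    iterate 2 exact ⟨4, by rw [h4]; rfl, by
      rw [show (1 : F) - 4 = -3 by norm_num, chi_neg H.chi_neg_one, h3]⟩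
    · exact ⟨9 / 4, by rw [chi_div H.chi, h4, h9]; rfl, by
        rw [show (1 : F) - 9 / 4 = -(5 / 4) by norm_num, chi_neg H.chi_neg_one, chi_div H.chi,
          h4, h5]; rfl⟩
    · exact ⟨16, by rw [h16]; rfl, by
        rw [show (1 : F) - 16 = -15 by norm_num, chi_neg H.chi_neg_one, h15]; rfl⟩
  have hu0 := ne_zero_of_chi_eq_one hu
  have e1 := H.map_sub_map_eq hC hu h1u hv h1v
  have e2 := H.map_sub_map_eq hC (u := u⁻¹) (by rw [chi_inv H.chi, hu])
    (by rw [show 1 - u⁻¹ = -((1 - u) / u) by field_simp; ring, chi_neg H.chi_neg_one,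
          chi_div H.chi, h1u, hu]; rfl) hv h1v
  rw [H.map_inv _ hu0] at e2
  exact H.torsion _ (by linear_combination (norm := module) e1 - e2)

/-- If the common value `C` were nonzero, near elements would be stable. -/
lemma value_eq_zero [CharZero F]
    (O : Subring F) (hO : ∀ x ∈ O, IsIntegral ℤ x) {p q u w : F} (hp : p ∈ O) (hq : q ∈ O)
    (hu : u ∈ O) (hw : w ∈ O) (hcp : c p = -1) (hcq : c q = -1) (hbez : u * p + w * q = 1) :
    C = 0 := by
  by_contra hC0
  have stable : ∀ h x, c h = 1 → f h = 0 → IsNear c x → IsNear c (h * x) := by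
    intro h x hh hf hx
    have hx0 := ne_zero_of_chi_eq_neg_one hx.1
    have hhx : c (h * x) = -1 := by rw [map_mul, hh, hx.1]; rfl
    refine ⟨hhx, (H.chi _ (sub_ne_zero.2 (ne_one_of_chi_eq_neg_one hhx).symm)).resolve_right
      fun hfar => hC0 (H.torsion _ ?_)⟩
    rw [← H.map_div_of_chi_eq_neg_one hC hx.1 hhx hx.2 hfar, mul_div_cancel_right₀ _ hx0, hf]
  refine not_isNear_stable H.chi H.chi_neg_one (fun x hx => ?_) (fun h x hh h1 hx => ?_) O hO hp
    hq hu hw hcp hcq hbez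
  · simpa using stable (-1) x H.chi_neg_one H.map_neg_one hx
  · exact stable h x hh (H.map_eq_zero_of_chi_one_sub hC hh h1) hx

end Values

section Vanishing

variable [CharZero F] (H : IsTwistedBloch c f) (hC : ∀ a, c a = -1 → f a = 0)

include H hC

lemma map_eq_zero_of_one_sub {u : F} (hu : c u = 1) (h1u : c (1 - u) = -1) : f u = 0 :=
  H.map_eq_zero_of_chi_one_sub (C := 0) (by simpa using hC) hu h1u

lemma map_one_sub {v : F} (hp : ∃ p, c p = -1) (hv : c v = 1) (h1v : c (1 - v) = 1) :
    f (1 - v) = -f v := by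
  have key : ∀ u, c u = 1 → c (1 - u) = -1 → f (1 - v) = -f v := fun u hu h1u => by
    have := H.map_sub_map_eq (C := 0) (by simpa using hC) hu h1u hv h1v
    rw [H.map_eq_zero_of_one_sub hC hu h1u] at this
    linear_combination (norm := module) -this
  obtain ⟨p, hp⟩ := hp
  have hp0 := ne_zero_of_chi_eq_neg_one hp
  rcases H.chi (1 - p) (sub_ne_zero.2 (ne_one_of_chi_eq_neg_one hp).symm) with h | h
  · exact key (1 - p) h (by simpa using hp)
  · refine key (1 - p⁻¹) ?_ (by rw [sub_sub_cancel, chi_inv H.chi, hp])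
    rw [show 1 - p⁻¹ = -((1 - p) / p) by field_simp; ring, chi_neg H.chi_neg_one, chi_div H.chi,
      h, hp]; rfl

lemma map_mul_left {u z : F} (hu : c u = 1) (h1u : c (1 - u) = -1) (hz : c z = 1) :
    f (u * z) = f z := by
  have hC' : ∀ a, c a = -1 → f a = c (1 - a) • (0 : M) := by simpa using hC
  have hu0 := ne_zero_of_chi_eq_one hu
  have hiu : c u⁻¹ = 1 := by rw [chi_inv H.chi, hu]
  have h1iu : c (1 - u⁻¹) = -1 := by
    rw [show 1 - u⁻¹ = -((1 - u) / u) by field_simp; ring, chi_neg H.chi_neg_one,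
      chi_div H.chi, h1u, hu]; rfl
  have base : ∀ u z, c u = 1 → c (1 - u) = -1 → c z = 1 → c (1 - z) = 1 → f (z / u) = f z :=
    fun u z hu h1u hz h1z => by
      rw [H.map_div_of_chi_ne hC' hu hz (ne_zero_of_chi_eq_neg_one h1u) (by rw [h1u, h1z]; rfl),
        H.map_eq_zero_of_one_sub hC hu h1u, sub_zero]
  by_cases hz1 : z = 1
  · rw [hz1, mul_one, H.map_one, H.map_eq_zero_of_one_sub hC hu h1u]
  rcases H.chi (1 - z) (sub_ne_zero.2 (Ne.symm hz1)) with h1z | h1z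
  · rw [← base _ z hiu h1iu hz h1z, div_inv_eq_mul, mul_comm]
  · rw [H.map_eq_zero_of_one_sub hC hz h1z]
    by_cases huz1 : u * z = 1
    · rw [huz1, H.map_one]
    have huz : c (u * z) = 1 := by rw [map_mul, hu, hz]; rfl
    rcases H.chi (1 - u * z) (sub_ne_zero.2 (Ne.symm huz1)) with h | h
    · rw [← base u _ hu h1u huz h, mul_div_cancel_left₀ _ hu0, H.map_eq_zero_of_one_sub hC hz h1z]
    · exact H.map_eq_zero_of_one_sub hC huz h

lemma good_one_sub {v : F} (hp : ∃ p, c p = -1) (hv : c v = 1) (hfv : f v ≠ 0) :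
    c (1 - v) = 1 ∧ f (1 - v) ≠ 0 := by
  have hv1 : v ≠ 1 := by rintro rfl; exact hfv H.map_one
  have h1v : c (1 - v) = 1 := (H.chi _ (sub_ne_zero.2 hv1.symm)).resolve_right fun h =>
    hfv (H.map_eq_zero_of_one_sub hC hv h)
  exact ⟨h1v, by rwa [H.map_one_sub hC hp hv h1v, neg_ne_zero]⟩

lemma near_div {v x : F} (hp : ∃ p, c p = -1) (hv : c v = 1) (hfv : f v ≠ 0) (hx : IsNear c x) :
    IsNear c (x / v) := by
  have hv0 := ne_zero_of_chi_eq_one hv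
  have h1x0 := ne_zero_of_chi_eq_one hx.2
  obtain ⟨h1v, hf1v⟩ := H.good_one_sub hC hp hv hfv
  refine ⟨by rw [chi_div H.chi, hx.1, hv]; rfl, ?_⟩
  rw [show 1 - x / v = (v - x) / v by field_simp, chi_div H.chi, hv, mul_one]
  refine (H.chi (v - x) (sub_ne_zero.2 ?_)).resolve_right fun h => hf1v ?_
  · rintro rfl; have := hx.1; rw [hv] at this; norm_num at this
  rw [show 1 - v = (1 - v) / (1 - x) * (1 - x) by field_simp,
    H.map_mul_left hC (by rw [chi_div H.chi, h1v, hx.2]; rfl) _ hx.2]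
  · exact H.map_eq_zero_of_one_sub hC hx.2 (by simpa using hx.1)
  · rw [show 1 - (1 - v) / (1 - x) = (v - x) / (1 - x) by field_simp; ring, chi_div H.chi, h,
      hx.2]; rfl

lemma near_mul {v x : F} (hp : ∃ p, c p = -1) (hv : c v = 1) (hfv : f v ≠ 0) (hx : IsNear c x) :
    IsNear c (x * v) := by
  rw [← div_inv_eq_mul]
  exact H.near_div hC hp (by rw [chi_inv H.chi, hv])
    (by rwa [H.map_inv _ (ne_zero_of_chi_eq_one hv), neg_ne_zero]) hx

lemma chi_sub_near {v x : F} (hp : ∃ p, c p = -1) (hv : c v = 1) (hfv : f v ≠ 0)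
    (hx : IsNear c x) : c (v - x) = 1 := by
  have hv0 := ne_zero_of_chi_eq_one hv
  have := (H.near_div hC hp hv hfv hx).2
  rwa [show 1 - x / v = (v - x) / v by field_simp, chi_div H.chi, hv, mul_one] at this

lemma map_sub_near {v x : F} (hp : ∃ p, c p = -1) (hv : c v = 1) (hfv : f v ≠ 0)
    (hx : IsNear c x) : f (v - x) = f v := by
  have hv0 := ne_zero_of_chi_eq_one hv
  have h := H.near_div hC hp hv hfv hx
  rw [show v - x = (1 - x / v) * v by field_simp]
  exact H.map_mul_left hC h.2 (by simpa using h.1) hv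

lemma near_neg {v x : F} (hp : ∃ p, c p = -1) (hv : c v = 1) (hfv : f v ≠ 0) (hx : IsNear c x) :
    IsNear c (-x) := by
  obtain ⟨h1v, hf1v⟩ := H.good_one_sub hC hp hv hfv
  have hv1 : c (v - 1) = 1 := by rwa [chi_sub_comm H.chi_neg_one]
  have hv10 := ne_zero_of_chi_eq_one hv1
  have hnear : IsNear c (x / (v - 1)) := by
    refine ⟨by rw [chi_div H.chi, hx.1, hv1]; rfl, ?_⟩
    rw [show 1 - x / (v - 1) = (v - 1 - x) / (v - 1) by field_simp, chi_div H.chi, hv1, mul_one]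
    refine (H.chi (v - 1 - x) (sub_ne_zero.2 ?_)).resolve_right fun h => hfv ?_
    · rintro rfl; have := hx.1; rw [hv1] at this; norm_num at this
    rw [← H.map_sub_near hC hp hv hfv hx]
    refine H.map_eq_zero_of_one_sub hC (H.chi_sub_near hC hp hv hfv hx) ?_
    rw [chi_sub_comm H.chi_neg_one, ← h]; congr 1; ring
  have := H.near_mul hC hp h1v hf1v hnear
  rwa [show x / (v - 1) * (1 - v) = -x by field_simp; ring] at this

lemma near_mul_of_one_sub {v h x : F} (hp : ∃ p, c p = -1) (hv : c v = 1) (hfv : f v ≠ 0)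
    (hh : c h = 1) (h1h : c (1 - h) = -1) (hx : IsNear c x) : IsNear c (h * x) := by
  have hhx : c (h * x) = -1 := by rw [map_mul, hh, hx.1]; rfl
  have hv0 := ne_zero_of_chi_eq_one hv
  refine ⟨hhx, (H.chi _ (sub_ne_zero.2 (ne_one_of_chi_eq_neg_one hhx).symm)).resolve_right
    fun hfar => ?_⟩
  have hvfar : c (v - h * x) = -1 := by
    refine (H.chi _ (sub_ne_zero.2 ?_)).resolve_left fun h1 => ?_
    · rintro rfl; rw [hhx] at hv; norm_num at hv
    have : IsNear c (h * x / v) := by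
      refine ⟨by rw [chi_div H.chi, hhx, hv]; rfl, ?_⟩
      rw [show 1 - h * x / v = (v - h * x) / v by field_simp, chi_div H.chi, h1, hv]; rfl
    have := (H.near_mul hC hp hv hfv this).2
    rw [div_mul_cancel₀ _ hv0, hfar] at this
    norm_num at this
  have key : ∀ d, c d = 1 → c (d - x) = 1 → c (d - h * x) = -1 →
      f (-(x * (1 - h))) = f (d - x) := fun d hd hdx hdhx => by
    have hdx0 := ne_zero_of_chi_eq_one hdx
    have := H.map_mul_left hC (u := -(x * (1 - h)) / (d - x)) (z := d - x)
      (by rw [chi_div H.chi, chi_neg H.chi_neg_one, map_mul, hx.1, h1h, hdx]; rfl)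
      (by rw [show 1 - -(x * (1 - h)) / (d - x) = (d - h * x) / (d - x) by field_simp; ring,
            chi_div H.chi, hdhx, hdx]; rfl) hdx
    rwa [div_mul_cancel₀ _ hdx0] at this
  apply hfv
  rw [← H.map_sub_near hC hp hv hfv hx, ← key v hv (H.chi_sub_near hC hp hv hfv hx) hvfar,
    key 1 (_root_.map_one c) hx.2 hfar]
  exact H.map_eq_zero_of_one_sub hC hx.2 (by simpa using hx.1)

end Vanishing

theorem eq_zero [CharZero F] (H : IsTwistedBloch c f)
    (O : Subring F) (hO : ∀ x ∈ O, IsIntegral ℤ x) {p q u w : F} (hp : p ∈ O) (hq : q ∈ O)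
    (hu : u ∈ O) (hw : w ∈ O) (hcp : c p = -1) (hcq : c q = -1) (hbez : u * p + w * q = 1)
    {x : F} (hx : x ≠ 0) : f x = 0 := by
  have hC : ∀ a, c a = -1 → f a = c (1 - a) • (c (1 - p) • f p) := fun a ha => by
    have h := H.smul_eq_smul ha hcp
    rw [smul_comm, ← h, smul_smul]
    rcases H.chi _ (sub_ne_zero.2 (ne_one_of_chi_eq_neg_one hcp).symm) with h1 | h1 <;>
      rw [h1] <;> simp
  have hC0 := H.value_eq_zero hC O hO hp hq hu hw hcp hcq hbez
  have hf : ∀ a, c a = -1 → f a = 0 := fun a ha => by rw [hC a ha, hC0, smul_zero]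
  rcases H.chi x hx with h | h
  · by_contra hfx
    exact not_isNear_stable H.chi H.chi_neg_one (fun y => H.near_neg hf ⟨p, hcp⟩ h hfx)
      (fun y z hy h1y => H.near_mul_of_one_sub hf ⟨p, hcp⟩ h hfx hy h1y) O hO hp hq hu hw
      hcp hcq hbez
  · exact hf x h

end IsTwistedBloch

lemma exists_mul_add_mul_eq_one {R : Type*} [CommRing R] [IsDomain R] [Algebra.IsIntegral ℤ R]
    [CharZero R] {p q : R} (hp : Prime p) (hq : Prime q) (hpq : ¬Associated p q) :
    ∃ u w : R, u * p + w * q = 1 := by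
  have hmax : ∀ r : R, Prime r → (Ideal.span {r}).IsMaximal := fun r hr => by
    have hprime : (Ideal.span {r}).IsPrime := (Ideal.span_singleton_prime hr.ne_zero).2 hr
    have hne : (Ideal.span {r}).comap (algebraMap ℤ R) ≠ ⊥ :=
      Ideal.comap_ne_bot_of_integral_mem hr.ne_zero (Ideal.mem_span_singleton_self r)
        (Algebra.IsIntegral.isIntegral r)
    have := Ideal.IsPrime.comap (algebraMap ℤ R) (K := Ideal.span {r})
    exact Ideal.isMaximal_of_isIntegral_of_isMaximal_comap _ (this.isMaximal hne)
  have hsup : Ideal.span {p} ⊔ Ideal.span {q} = ⊤ :=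
    (hmax p hp).coprime_of_ne (hmax q hq) fun h => hpq (Ideal.span_singleton_eq_span_singleton.1 h)
  rw [Ideal.eq_top_iff_one, Submodule.mem_sup] at hsup
  obtain ⟨a, ha, b, hb, hab⟩ := hsup
  obtain ⟨u, rfl⟩ := Ideal.mem_span_singleton'.1 ha
  obtain ⟨w, rfl⟩ := Ideal.mem_span_singleton'.1 hb
  exact ⟨u, w, hab⟩

lemma sqrtC_sq (d : ℤ) : sqrtC d ^ 2 = d := by
  unfold sqrtC
  split_ifs with h
  · rw [← Complex.ofReal_pow, Real.sq_sqrt (by exact_mod_cast h)]; simp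
  · rw [mul_pow, Complex.I_sq, ← Complex.ofReal_pow, Real.sq_sqrt (by
      have : 0 ≤ -d := by omega
      exact_mod_cast this)]
    simp

lemma isIntegral_omegaQ (d : ℤ) : IsIntegral ℤ (omegaQ d) := by
  unfold omegaQ
  have hs := sqrtC_sq d
  split_ifs with h
  · obtain ⟨k, hk⟩ : ∃ k, d = 4 * k + 1 := ⟨d / 4, by omega⟩
    refine ⟨Polynomial.X ^ 2 - Polynomial.X - Polynomial.C k, by monicity!, ?_⟩
    rw [hk] at hs ⊢
    push_cast at hs
    rw [Polynomial.eval₂_sub, Polynomial.eval₂_sub, Polynomial.eval₂_pow, Polynomial.eval₂_X,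
      Polynomial.eval₂_C, algebraMap_int_eq, eq_intCast]
    linear_combination hs / 4
  · refine ⟨Polynomial.X ^ 2 - Polynomial.C d, by monicity!, ?_⟩
    rw [Polynomial.eval₂_sub, Polynomial.eval₂_pow, Polynomial.eval₂_X, Polynomial.eval₂_C,
      algebraMap_int_eq, eq_intCast, hs, sub_self]

lemma isIntegral_of_mem_intRing (d : ℤ) : ∀ x ∈ intRing d, IsIntegral ℤ x := by
  have h : intRing d ≤ (integralClosure ℤ (quadField d)).toSubring := by
    rw [intRing, Subring.closure_le, Set.singleton_subset_iff]
    exact (isIntegral_algHom_iff ((quadField d).val.restrictScalars ℤ)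
      Subtype.val_injective).1 (isIntegral_omegaQ d)
  exact fun x hx => h hx

instance (d : ℤ) : Algebra.IsIntegral ℤ (intRing d) :=
  ⟨fun x => (isIntegral_algHom_iff (intRing d).subtype.toIntAlgHom Subtype.val_injective).1
    (isIntegral_of_mem_intRing d x x.2)⟩

section Extension

variable {F : Type} [Field F] (χ : Fˣ →* ℤˣ)

open Classical in
/-- The extension by `0` to `F` of a character of `F^×`. -/
noncomputable def chiExt : F →*₀ ℤ where
  toFun x := if h : x = 0 then 0 else (χ (Units.mk0 x h) : ℤ)
  map_zero' := by simp
  map_one' := by simp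
  map_mul' x y := by
    by_cases hx : x = 0
    · simp [hx]
    by_cases hy : y = 0
    · simp [hy]
    simp [hx, hy]

lemma chiExt_apply {x : F} (hx : x ≠ 0) : chiExt χ x = (χ (Units.mk0 x hx) : ℤ) :=
  dif_neg hx

open Classical in
/-- The function `x ↦ [x]` on `F`, with value `0` at `0`. -/
noncomputable def clsExt (x : F) : RPplus F χ :=
  if h : x = 0 then 0 else rpCls F χ (Units.mk0 x h)

lemma clsExt_apply {x : F} (hx : x ≠ 0) : clsExt χ x = rpCls F χ (Units.mk0 x hx) :=
  dif_neg hx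

lemma isTwistedBloch (hχ : χ (-1) = 1) : IsTwistedBloch (chiExt χ) (clsExt χ) where
  torsion z hz := by
    let t : Zhalf := ⟨2⁻¹, Subring.subset_closure rfl⟩
    have ht : t * 2 = 1 := Subtype.ext (inv_mul_cancel₀ two_ne_zero)
    rw [← one_smul Zhalf z, ← ht, mul_smul, two_smul, hz, smul_zero]
  chi x hx := by
    rw [chiExt_apply χ hx]
    rcases Int.units_eq_one_or (χ (Units.mk0 x hx)) with h | h <;> simp [h]
  chi_neg_one := by
    rw [chiExt_apply χ (by simp : (-1 : F) ≠ 0),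
      show Units.mk0 (-1 : F) (by simp) = -1 from Units.ext rfl, hχ]
    rfl
  map_one := by
    rw [clsExt_apply χ one_ne_zero, Units.mk0_one]
    exact (Submodule.Quotient.mk_eq_zero _).2
      (Submodule.subset_span (Or.inl (Or.inl (Or.inl rfl))))
  map_inv x hx := by
    rw [clsExt_apply χ hx, clsExt_apply χ (inv_ne_zero hx), eq_neg_iff_add_eq_zero, add_comm,
      show Units.mk0 x⁻¹ (inv_ne_zero hx) = (Units.mk0 x hx)⁻¹ from Units.ext rfl]
    exact (Submodule.Quotient.mk_eq_zero _).2
      (Submodule.subset_span (Or.inr ⟨Units.mk0 x hx, rfl⟩))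
  five x y hx0 hx1 hy0 hy1 hxy := by
    have h1x := sub_ne_zero.2 hx1.symm
    have h1y := sub_ne_zero.2 hy1.symm
    have hxi : x⁻¹ - 1 ≠ 0 := sub_ne_zero.2 fun h => hx1 (inv_eq_one.1 h)
    have hi : ∀ z : F, z ≠ 1 → 1 - z⁻¹ ≠ 0 := fun z hz =>
      sub_ne_zero.2 fun h => hz (inv_eq_one.1 h.symm)
    have hrel := (Submodule.Quotient.mk_eq_zero (rpSub F χ)).2 (Submodule.subset_span
      (Or.inl (Or.inl (Or.inr ⟨x, y, hx0, hx1, hy0, hy1, hxy, rfl⟩))))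
    have e1 : y * (1 - x) / (x * (1 - y)) = (1 - x⁻¹) / (1 - y⁻¹) := by
      rw [show 1 - x⁻¹ = -((1 - x) / x) by field_simp; ring,
        show 1 - y⁻¹ = -((1 - y) / y) by field_simp; ring]
      field_simp
    have e2 : chiExt χ x * chiExt χ (1 - x) = chiExt χ (x⁻¹ - 1) := by
      rw [show 1 - x = x * (x⁻¹ - 1) by field_simp, map_mul, ← mul_assoc, chiExt_apply χ hx0,
        ← Units.val_mul, Int.units_mul_self, Units.val_one, one_mul]
    rw [e1, e2, chiExt_apply χ hx0, chiExt_apply χ h1x, chiExt_apply χ hxi, clsExt_apply χ hx0,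
      clsExt_apply χ hy0, clsExt_apply χ (div_ne_zero hy0 hx0),
      clsExt_apply χ (div_ne_zero (hi x hx1) (hi y hy1)),
      clsExt_apply χ (div_ne_zero h1x h1y), ← Int.cast_smul_eq_zsmul Zhalf,
      ← Int.cast_smul_eq_zsmul Zhalf, ← Int.cast_smul_eq_zsmul Zhalf]
    exact hrel

end Extension

/-- Let `m ∈ {1,2,3,7,11}`, `F = ℚ(√(−m))` with ring of integers
`𝓞 = ℤ[ω_{−m}]` (a Euclidean domain).  Let `χ : F^× → {±1}` be trivial on the units of
`𝓞` with `χ(p) = χ(q) = −1` for two non-associated primes `p, q` of `𝓞`.  Then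
`RP₊(F)[1/2]_χ = 0`, i.e. the class of `[x]` vanishes for every `x ∈ F^×`. -/
theorem stmt14 (m : ℤ) (hm : m ∈ ({1, 2, 3, 7, 11} : Set ℤ))
    (χ : (quadField (-m))ˣ →* ℤˣ)
    (hunits : ∀ u : (intRing (-m))ˣ,
      χ (Units.map (intRing (-m)).subtype.toMonoidHom u) = 1)
    (p q : intRing (-m)) (hp : Prime p) (hq : Prime q) (hpq : ¬ Associated p q)
    (hχp : χ (Units.mk0 ((p : quadField (-m))) (by simpa using hp.ne_zero)) = -1)
    (hχq : χ (Units.mk0 ((q : quadField (-m))) (by simpa using hq.ne_zero)) = -1) :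
    ∀ x : (quadField (-m))ˣ, rpCls (quadField (-m)) χ x = 0 := by
  have hχ : χ (-1) = 1 := by
    rw [← hunits (-1)]
    congr 1
  obtain ⟨u, w, huw⟩ := exists_mul_add_mul_eq_one hp hq hpq
  intro x
  have h := (isTwistedBloch χ hχ).eq_zero (intRing (-m)) (isIntegral_of_mem_intRing (-m))
    p.2 q.2 u.2 w.2 (by rw [chiExt_apply χ (by simpa using hp.ne_zero), hχp]; rfl)
    (by rw [chiExt_apply χ (by simpa using hq.ne_zero), hχq]; rfl)
    (by exact_mod_cast congrArg Subtype.val huw) x.ne_zero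
  rwa [clsExt_apply χ x.ne_zero, Units.mk0_val] at h
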